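/- Let S = K[x₁,...,x₅] and I = (x₁⁵, x₂⁵, x₃⁵, x₄⁵, x₅⁵, x₁x₂x₃x₄x₅). Then the multiplication map ×(x₁+x₂+x₃+x₄+x₅) : (S/I)_k → (S/I)_{k+1} is neither injective nor surjective for k = 8 and k = 9. -/

import Mathlib

open MvPolynomial

/-- The minimal number of generators of an ideal. -/
noncomputable def mu {R : Type*} [CommRing R] (I : Ideal R) : ℕ :=
  sInf {k | ∃ s : Finset R, s.card = k ∧ Ideal.span (s : Set R) = I}

/-- The graded maximal ideal `(x₁, …, xₙ)` of `K[x₁, …, xₙ]`. -/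
noncomputable def mm (K : Type*) [Field K] (n : ℕ) : Ideal (MvPolynomial (Fin n) K) :=
  Ideal.span (Set.range X)

/-- `I` is `m`-full: `mI : y = I` for some `y ∈ m`. -/
def IsMFull {R : Type*} [CommRing R] (m I : Ideal R) : Prop :=
  ∃ y ∈ m, (m * I).colon (Ideal.span {y}) = I

/-- A homogeneous ideal: one containing all homogeneous components of its elements. -/
def IsHomog {K : Type*} [Field K] {n : ℕ} (I : Ideal (MvPolynomial (Fin n) K)) : Prop :=
  ∀ f ∈ I, ∀ k : ℕ, homogeneousComponent k f ∈ I

/-- `dim_K (S/I)_k`, the dimension of the degree `k` part of `S/I`. -/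
noncomputable def hdim (K : Type*) [Field K] (n : ℕ)
    (I : Ideal (MvPolynomial (Fin n) K)) (k : ℕ) : ℕ :=
  Module.finrank K (Submodule.map (Ideal.Quotient.mkₐ K I).toLinearMap
    (homogeneousSubmodule (Fin n) K k))


def cc (a b c d e : ℕ) : ℤ :=
  bif Nat.beq a b || (Nat.beq a c || (Nat.beq a d || (Nat.beq a e || (Nat.beq b c || (Nat.beq b d ||
    (Nat.beq b e || (Nat.beq c d || (Nat.beq c e || (Nat.beq d e || (Nat.ble 5 a || (Nat.ble 5 b ||
    (Nat.ble 5 c || (Nat.ble 5 d || Nat.ble 5 e))))))))))))) then 0 else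
    ((b : ℤ) - a) * (c - a) * (d - a) * (e - a) * (c - b) * (d - b) * (e - b) * (d - c) * (e - c)
      * (e - d)

theorem cc_key : ∀ a < 5, ∀ b < 5, ∀ c < 5, ∀ d < 5, ∀ e < 5,
    cc (a+1) b c d e + cc a (b+1) c d e + cc a b (c+1) d e + cc a b c (d+1) e
      + cc a b c d (e+1) = 0 := by
  decide +kernel

theorem cc_key' : ∀ a < 4, ∀ b < 4, ∀ c < 4, ∀ d < 4, ∀ e < 4,
    cc (a+1) (b+1) (c+1) (d+1) (e+1) = 0 := by
  decide +kernel

theorem cc_zero (a b c d e : ℕ) (h : ¬ (a < 5 ∧ b < 5 ∧ c < 5 ∧ d < 5 ∧ e < 5)) :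
    cc a b c d e = 0 := by
  unfold cc
  have : 5 ≤ a ∨ 5 ≤ b ∨ 5 ≤ c ∨ 5 ≤ d ∨ 5 ≤ e := by omega
  rcases this with h | h | h | h | h <;> rw [Nat.ble_eq_true_of_le h] <;> simp

theorem cc_sum (a b c d e : ℕ) :
    cc (a+1) b c d e + cc a (b+1) c d e + cc a b (c+1) d e + cc a b c (d+1) e
      + cc a b c d (e+1) = 0 := by
  by_cases h : a < 5 ∧ b < 5 ∧ c < 5 ∧ d < 5 ∧ e < 5
  · exact cc_key a h.1 b h.2.1 c h.2.2.1 d h.2.2.2.1 e h.2.2.2.2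
  · rw [cc_zero (a+1) b c d e (by omega), cc_zero a (b+1) c d e (by omega),
      cc_zero a b (c+1) d e (by omega), cc_zero a b c (d+1) e (by omega),
      cc_zero a b c d (e+1) (by omega)]
    rfl

theorem cc_one (a b c d e : ℕ) : cc (a+1) (b+1) (c+1) (d+1) (e+1) = 0 := by
  by_cases h : a < 4 ∧ b < 4 ∧ c < 4 ∧ d < 4 ∧ e < 4
  · exact cc_key' a h.1 b h.2.1 c h.2.2.1 d h.2.2.2.1 e h.2.2.2.2
  · exact cc_zero _ _ _ _ _ (by omega)

noncomputable def phi (K : Type*) [Field K] : MvPolynomial (Fin 5) K →ₗ[K] K :=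
  (basisMonomials (Fin 5) K).constr K
    (fun m => ((cc (m 0) (m 1) (m 2) (m 3) (m 4) : ℤ) : K))

theorem phi_mon {K : Type*} [Field K] (m : Fin 5 →₀ ℕ) :
    phi K (monomial m 1) = ((cc (m 0) (m 1) (m 2) (m 3) (m 4) : ℤ) : K) := by
  have h := (basisMonomials (Fin 5) K).constr_basis K
    (fun m => ((cc (m 0) (m 1) (m 2) (m 3) (m 4) : ℤ) : K)) m
  rwa [coe_basisMonomials] at h

/-- A linear functional that kills all monomial multiples of `s` kills all multiples. -/
theorem kill_mul {K : Type*} [Field K] (ψ : MvPolynomial (Fin 5) K →ₗ[K] K)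
    (s : MvPolynomial (Fin 5) K) (h : ∀ n, ψ (monomial n 1 * s) = 0)
    (f : MvPolynomial (Fin 5) K) : ψ (f * s) = 0 := by
  induction f using MvPolynomial.induction_on' with
  | monomial u a =>
    have : monomial u a = a • (monomial u (1 : K)) := by simp [smul_monomial]
    rw [this, smul_mul_assoc, map_smul, h, smul_zero]
  | add p q hp hq => rw [add_mul, map_add, hp, hq, add_zero]

theorem kill_span {K : Type*} [Field K] (ψ : MvPolynomial (Fin 5) K →ₗ[K] K)
    (T : Set (MvPolynomial (Fin 5) K)) (h : ∀ s ∈ T, ∀ n, ψ (monomial n 1 * s) = 0)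
    (f : MvPolynomial (Fin 5) K) (hf : f ∈ Ideal.span T) : ψ f = 0 := by
  induction hf using Submodule.span_induction with
  | mem x hx => simpa using kill_mul ψ x (h x hx) 1
  | zero => simp
  | add x y _ _ hx hy => rw [map_add, hx, hy, add_zero]
  | smul a x hx ih =>
    revert a
    suffices H : ∀ x ∈ Ideal.span T, ∀ a, ψ (a * x) = 0 from fun a => H x hx a
    intro x hx
    induction hx using Submodule.span_induction with
    | mem x hx => exact kill_mul ψ x (h x hx)
    | zero => simp
    | add x y _ _ hx hy => intro a; rw [mul_add, map_add, hx, hy, add_zero]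
    | smul b x _ ih2 => intro a; rw [smul_eq_mul, ← mul_assoc]; exact ih2 _

theorem phi_L {K : Type*} [Field K] (f : MvPolynomial (Fin 5) K) :
    phi K ((X 0 + X 1 + X 2 + X 3 + X 4) * f) = 0 := by
  rw [mul_comm]
  apply kill_mul
  intro n
  simp only [mul_add, map_add, X, monomial_mul, mul_one, phi_mon]
  have := cc_sum (n 0) (n 1) (n 2) (n 3) (n 4)
  have h2 := congrArg (Int.cast (R := K)) this
  push_cast at h2
  simpa [Finsupp.single_apply] using h2

theorem phi_I {K : Type*} [Field K] (f : MvPolynomial (Fin 5) K)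
    (hf : f ∈ Ideal.span {X 0 ^ 5, X 1 ^ 5, X 2 ^ 5, X 3 ^ 5, X 4 ^ 5,
              X 0 * X 1 * X 2 * X 3 * X 4}) : phi K f = 0 := by
  refine kill_span _ _ ?_ f hf
  intro s hs n
  simp only [Set.mem_insert_iff, Set.mem_singleton_iff] at hs
  rcases hs with rfl | rfl | rfl | rfl | rfl | rfl
  · rw [X_pow_eq_monomial, monomial_mul, mul_one, phi_mon, cc_zero _ _ _ _ _ (by simp), Int.cast_zero]
  · rw [X_pow_eq_monomial, monomial_mul, mul_one, phi_mon, cc_zero _ _ _ _ _ (by simp), Int.cast_zero]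
  · rw [X_pow_eq_monomial, monomial_mul, mul_one, phi_mon, cc_zero _ _ _ _ _ (by simp), Int.cast_zero]
  · rw [X_pow_eq_monomial, monomial_mul, mul_one, phi_mon, cc_zero _ _ _ _ _ (by simp), Int.cast_zero]
  · rw [X_pow_eq_monomial, monomial_mul, mul_one, phi_mon, cc_zero _ _ _ _ _ (by simp), Int.cast_zero]
  · simp only [X, monomial_mul, mul_one, phi_mon]
    have := cc_one (n 0) (n 1) (n 2) (n 3) (n 4)
    simp [this]

theorem not_surj {K : Type*} [Field K] [CharZero K] (f : MvPolynomial (Fin 5) K) :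
    X 1 * (X 2 ^ 2 * X 3 ^ 3 * X 4 ^ 4) - (X 0 + X 1 + X 2 + X 3 + X 4) * f ∉
      Ideal.span {X 0 ^ 5, X 1 ^ 5, X 2 ^ 5, X 3 ^ 5, X 4 ^ 5,
              X 0 * X 1 * X 2 * X 3 * X 4} := by
  intro h
  have h1 := phi_I _ h
  rw [map_sub, phi_L, sub_zero] at h1
  simp only [X_pow_eq_monomial] at h1
  simp only [X, monomial_mul, mul_one, phi_mon] at h1
  have e : cc 0 1 2 3 4 = 288 := by decide
  simp [e] at h1

theorem gen_id {R : Type*} [CommRing R] (a b c d e e1 e2 e3 e4 e5 : R)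
    (h1 : e1 = a + b + c + d + e)
    (h2 : e2 = a*b+a*c+a*d+a*e+b*c+b*d+b*e+c*d+c*e+d*e)
    (h3 : e3 = a*b*c+a*b*d+a*b*e+a*c*d+a*c*e+a*d*e+b*c*d+b*c*e+b*d*e+c*d*e)
    (h4 : e4 = a*b*c*d+a*b*c*e+a*b*d*e+a*c*d*e+b*c*d*e)
    (h5 : e5 = a*b*c*d*e) :
    e1 * (7*(e2^2-e4)*(e1^4-5*(e1^2*e2)+5*e2^2+5*(e1*e3)-5*e4)
      + 5*e2*(e1^6-7*(e1^4*e2)+14*(e1^2*e2^2)-7*e2^3+7*(e1^3*e3)-21*(e1*e2*e3)+7*e3^2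
        -7*(e1^2*e4)+14*(e2*e4))) =
    7*(e2^2-e4)*(a^5+b^5+c^5+d^5+e^5)
      + 5*e2*(a^2*a^5+b^2*b^5+c^2*c^5+d^2*d^5+e^2*e^5) - (35*e1^2*e2-35*e4)*e5 := by
  have N : ∀ x : R, x = a ∨ x = b ∨ x = c ∨ x = d ∨ x = e →
      x^5 = e1*x^4-e2*x^3+e3*x^2-e4*x+e5 := by
    subst h1 h2 h3 h4 h5
    rintro x (rfl | rfl | rfl | rfl | rfl) <;> ring
  have q1 : a+b+c+d+e = e1 := h1.symm
  have q2 : a^2+b^2+c^2+d^2+e^2 = e1^2-2*e2 := by subst h1 h2; ring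
  have q3 : a^3+b^3+c^3+d^3+e^3 = e1^3-3*e1*e2+3*e3 := by subst h1 h2 h3; ring
  have q4 : a^4+b^4+c^4+d^4+e^4 = e1*(a^3+b^3+c^3+d^3+e^3)-e2*(a^2+b^2+c^2+d^2+e^2)
      +e3*(a+b+c+d+e)-4*e4 := by subst h1 h2 h3 h4; ring
  have na := N a (by simp)
  have nb := N b (by simp)
  have nc := N c (by simp)
  have nd := N d (by simp)
  have ne := N e (by simp)
  have q5 : a^5+b^5+c^5+d^5+e^5 = e1*(a^4+b^4+c^4+d^4+e^4)-e2*(a^3+b^3+c^3+d^3+e^3)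
      +e3*(a^2+b^2+c^2+d^2+e^2)-e4*(a+b+c+d+e)+5*e5 := by
    linear_combination na + nb + nc + nd + ne
  have q6 : a^6+b^6+c^6+d^6+e^6 = e1*(a^5+b^5+c^5+d^5+e^5)-e2*(a^4+b^4+c^4+d^4+e^4)
      +e3*(a^3+b^3+c^3+d^3+e^3)-e4*(a^2+b^2+c^2+d^2+e^2)+e5*(a+b+c+d+e) := by
    linear_combination a*na + b*nb + c*nc + d*nd + e*ne
  have q7 : a^2*a^5+b^2*b^5+c^2*c^5+d^2*d^5+e^2*e^5 = e1*(a^6+b^6+c^6+d^6+e^6)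
      -e2*(a^5+b^5+c^5+d^5+e^5)
      +e3*(a^4+b^4+c^4+d^4+e^4)-e4*(a^3+b^3+c^3+d^3+e^3)+e5*(a^2+b^2+c^2+d^2+e^2) := by
    linear_combination a^2*na + b^2*nb + c^2*nc + d^2*nd + e^2*ne
  rw [q7, q6, q5, q4, q3, q2, q1]
  ring

section
variable (K : Type*) [Field K]

noncomputable def E1 : MvPolynomial (Fin 5) K := X 0 + X 1 + X 2 + X 3 + X 4
noncomputable def E2 : MvPolynomial (Fin 5) K :=
  X 0*X 1+X 0*X 2+X 0*X 3+X 0*X 4+X 1*X 2+X 1*X 3+X 1*X 4+X 2*X 3+X 2*X 4+X 3*X 4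
noncomputable def E3 : MvPolynomial (Fin 5) K :=
  X 0*X 1*X 2+X 0*X 1*X 3+X 0*X 1*X 4+X 0*X 2*X 3+X 0*X 2*X 4+X 0*X 3*X 4+X 1*X 2*X 3
    +X 1*X 2*X 4+X 1*X 3*X 4+X 2*X 3*X 4
noncomputable def E4 : MvPolynomial (Fin 5) K :=
  X 0*X 1*X 2*X 3+X 0*X 1*X 2*X 4+X 0*X 1*X 3*X 4+X 0*X 2*X 3*X 4+X 1*X 2*X 3*X 4
noncomputable def F8 : MvPolynomial (Fin 5) K :=
  7*(E2 K^2-E4 K)*(E1 K^4-5*(E1 K^2*E2 K)+5*E2 K^2+5*(E1 K*E3 K)-5*E4 K)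
      + 5*E2 K*(E1 K^6-7*(E1 K^4*E2 K)+14*(E1 K^2*E2 K^2)-7*E2 K^3+7*(E1 K^3*E3 K)
        -21*(E1 K*E2 K*E3 K)+7*E3 K^2
        -7*(E1 K^2*E4 K)+14*(E2 K*E4 K))
end

theorem F8_ker (K : Type*) [Field K] : (X 0 + X 1 + X 2 + X 3 + X 4) * F8 K ∈
    Ideal.span {X 0 ^ 5, X 1 ^ 5, X 2 ^ 5, X 3 ^ 5, X 4 ^ 5,
              X 0 * X 1 * X 2 * X 3 * X 4} := by
  have h := gen_id (X 0) (X 1) (X 2) (X 3) (X 4) (E1 K) (E2 K) (E3 K) (E4 K) _ rfl rfl rfl rfl rfl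
  change (X 0 + X 1 + X 2 + X 3 + X 4) * F8 K = _ at h
  rw [h]
  refine Ideal.sub_mem _ (Ideal.add_mem _ (Ideal.mul_mem_left _ _ ?_) (Ideal.mul_mem_left _ _ ?_))
    (Ideal.mul_mem_left _ _ (Ideal.subset_span (by simp)))
  · exact Ideal.add_mem _ (Ideal.add_mem _ (Ideal.add_mem _ (Ideal.add_mem _
      (Ideal.subset_span (by simp)) (Ideal.subset_span (by simp))) (Ideal.subset_span (by simp)))
      (Ideal.subset_span (by simp))) (Ideal.subset_span (by simp))
  · refine Ideal.add_mem _ (Ideal.add_mem _ (Ideal.add_mem _ (Ideal.add_mem _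
      ?_ ?_) ?_) ?_) ?_ <;> exact Ideal.mul_mem_left _ _ (Ideal.subset_span (by simp))

theorem num_hom {K : Type*} [Field K] (n : ℕ) [n.AtLeastTwo] :
    (OfNat.ofNat n : MvPolynomial (Fin 5) K).IsHomogeneous 0 := by
  have : (OfNat.ofNat n : MvPolynomial (Fin 5) K) = C (OfNat.ofNat n) := (map_ofNat C n).symm
  rw [this]; exact isHomogeneous_C _ _

theorem F8_hom (K : Type*) [Field K] : (F8 K).IsHomogeneous 8 := by
  have x : ∀ i : Fin 5, (X i : MvPolynomial (Fin 5) K).IsHomogeneous 1 :=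
    fun i => isHomogeneous_X K i
  have h1 : (E1 K).IsHomogeneous 1 :=
    ((((x 0).add (x 1)).add (x 2)).add (x 3)).add (x 4)
  have h2 : (E2 K).IsHomogeneous 2 := by
    unfold E2
    repeat' apply IsHomogeneous.add
    all_goals exact (x _).mul (x _)
  have h3 : (E3 K).IsHomogeneous 3 := by
    unfold E3
    repeat' apply IsHomogeneous.add
    all_goals exact ((x _).mul (x _)).mul (x _)
  have h4 : (E4 K).IsHomogeneous 4 := by
    unfold E4
    repeat' apply IsHomogeneous.add
    all_goals exact (((x _).mul (x _)).mul (x _)).mul (x _)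
  have m : ∀ (n d : ℕ) [n.AtLeastTwo] (p : MvPolynomial (Fin 5) K), p.IsHomogeneous d →
      ((OfNat.ofNat n : MvPolynomial (Fin 5) K) * p).IsHomogeneous d := by
    intro n d _ p hp
    simpa using (num_hom n).mul hp
  have A : (E2 K^2-E4 K).IsHomogeneous 4 := (h2.pow 2).sub h4
  have B : (E1 K^4-5*(E1 K^2*E2 K)+5*E2 K^2+5*(E1 K*E3 K)-5*E4 K).IsHomogeneous 4 :=
    (((((h1.pow 4)).sub (m 5 4 _ ((h1.pow 2).mul h2))).add (m 5 4 _ (h2.pow 2))).add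
      (m 5 4 _ (h1.mul h3))).sub (m 5 4 _ h4)
  have D : (E1 K^6-7*(E1 K^4*E2 K)+14*(E1 K^2*E2 K^2)-7*E2 K^3+7*(E1 K^3*E3 K)
        -21*(E1 K*E2 K*E3 K)+7*E3 K^2
        -7*(E1 K^2*E4 K)+14*(E2 K*E4 K)).IsHomogeneous 6 :=
    (((((((((h1.pow 6)).sub (m 7 6 _ ((h1.pow 4).mul h2))).add
      (m 14 6 _ ((h1.pow 2).mul (h2.pow 2)))).sub (m 7 6 _ (h2.pow 3))).add
      (m 7 6 _ ((h1.pow 3).mul h3))).sub (m 21 6 _ ((h1.mul h2).mul h3))).add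
      (m 7 6 _ (h3.pow 2))).sub (m 7 6 _ ((h1.pow 2).mul h4))).add (m 14 6 _ (h2.mul h4))
  exact ((m 7 4 _ A).mul B).add ((m 5 2 _ h2).mul D)

theorem F8_mod {K : Type*} [Field K] {R : Type*} [CommRing R]
    (q : MvPolynomial (Fin 5) K →+* R)
    (h0 : q (X 0) ^ 5 = 0) (h1 : q (X 1) ^ 5 = 0) (h2 : q (X 2) = 0) (h3 : q (X 3) = 0)
    (h4 : q (X 4) = 0) : q (F8 K) = 2 * (q (X 0) ^ 4 * q (X 1) ^ 4) := by
  simp only [F8, E1, E2, E3, E4, map_add, map_sub, map_mul, map_pow, map_ofNat, h2, h3, h4]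
  generalize q (X 0) = a at *
  generalize q (X 1) = b at *
  linear_combination (5*a^2*b+2*a*b^2-2*b^3) * h0 + (5*b^2*a+2*b*a^2-2*a^3) * h1

theorem F9_not (K : Type*) [Field K] [CharZero K] : X 2 * F8 K ∉
    Ideal.span {X 0 ^ 5, X 1 ^ 5, X 2 ^ 5, X 3 ^ 5, X 4 ^ 5,
              X 0 * X 1 * X 2 * X 3 * X 4} := by
  intro h
  set m : Fin 5 →₀ ℕ := Finsupp.single 0 4 + Finsupp.single 1 4 with hm
  have c1 : coeff (Finsupp.single 2 1 + m) (X 2 * F8 K) = 0 := by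
    refine kill_span (lcoeff K (Finsupp.single 2 1 + m)) _ ?_ _ h
    intro s hs n
    have key : ∀ u : Fin 5 →₀ ℕ, (∃ i, (Finsupp.single 2 1 + m : Fin 5 →₀ ℕ) i < u i) →
        coeff (Finsupp.single 2 1 + m) (monomial n (1 : K) * monomial u 1) = 0 := by
      rintro u ⟨i, hi⟩
      rw [monomial_mul, coeff_monomial, if_neg]
      intro h
      rw [← h] at hi
      simp at hi
    simp only [Set.mem_insert_iff, Set.mem_singleton_iff] at hs
    rw [lcoeff_apply]
    rcases hs with rfl | rfl | rfl | rfl | rfl | rfl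
    · rw [X_pow_eq_monomial]; exact key _ ⟨0, by simp [hm]⟩
    · rw [X_pow_eq_monomial]; exact key _ ⟨1, by simp [hm]⟩
    · rw [X_pow_eq_monomial]; exact key _ ⟨2, by simp [hm]⟩
    · rw [X_pow_eq_monomial]; exact key _ ⟨3, by simp [hm]⟩
    · rw [X_pow_eq_monomial]; exact key _ ⟨4, by simp [hm]⟩
    · have e : (X 0 * X 1 * X 2 * X 3 * X 4 : MvPolynomial (Fin 5) K) = monomial
          (Finsupp.single 0 1 + Finsupp.single 1 1 + Finsupp.single 2 1 + Finsupp.single 3 1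
            + Finsupp.single 4 1) 1 := by
        simp only [X, monomial_mul, mul_one]
      rw [e]
      exact key _ ⟨3, by simp [hm]⟩
  rw [coeff_X_mul] at c1
  let J : Ideal (MvPolynomial (Fin 5) K) := Ideal.span {X 0 ^ 5, X 1 ^ 5, X 2, X 3, X 4}
  have hJ : ∀ p ∈ ({X 0 ^ 5, X 1 ^ 5, X 2, X 3, X 4} : Set (MvPolynomial (Fin 5) K)),
      Ideal.Quotient.mk J p = 0 := fun p hp =>
    Ideal.Quotient.eq_zero_iff_mem.2 (Ideal.subset_span hp)
  have hF := F8_mod (Ideal.Quotient.mk J) (by rw [← map_pow]; exact hJ _ (by simp))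
    (by rw [← map_pow]; exact hJ _ (by simp)) (hJ _ (by simp)) (hJ _ (by simp)) (hJ _ (by simp))
  have hF2 : F8 K - 2 * (X 0 ^ 4 * X 1 ^ 4) ∈ J := by
    rw [← Ideal.Quotient.eq_zero_iff_mem]
    rw [map_sub, hF, map_mul, map_mul, map_pow, map_pow, map_ofNat, sub_self]
  have c2 : coeff m (F8 K - 2 * (X 0 ^ 4 * X 1 ^ 4)) = 0 := by
    refine kill_span (lcoeff K m) _ ?_ _ hF2
    intro s hs n
    have key : ∀ u : Fin 5 →₀ ℕ, (∃ i, m i < u i) →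
        coeff m (monomial n (1 : K) * monomial u 1) = 0 := by
      rintro u ⟨i, hi⟩
      rw [monomial_mul, coeff_monomial, if_neg]
      intro h
      rw [← h] at hi
      simp at hi
    simp only [Set.mem_insert_iff, Set.mem_singleton_iff] at hs
    rw [lcoeff_apply]
    rcases hs with rfl | rfl | rfl | rfl | rfl
    · rw [X_pow_eq_monomial]; exact key _ ⟨0, by simp [hm]⟩
    · rw [X_pow_eq_monomial]; exact key _ ⟨1, by simp [hm]⟩
    · exact key _ ⟨2, by simp [hm]⟩
    · exact key _ ⟨3, by simp [hm]⟩
    · exact key _ ⟨4, by simp [hm]⟩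
  have e : (2 * (X 0 ^ 4 * X 1 ^ 4) : MvPolynomial (Fin 5) K) = monomial m 2 := by
    have : (2 : MvPolynomial (Fin 5) K) = C 2 := (map_ofNat C 2).symm
    rw [X_pow_eq_monomial, X_pow_eq_monomial, monomial_mul, this, C_mul_monomial]
    simp [hm]
  rw [e, coeff_sub, c1, coeff_monomial, if_pos rfl] at c2
  simp at c2

/-- For `S = K[x₁,…,x₅]` (char `K = 0`) and
`I = (x₁⁵,…,x₅⁵, x₁x₂x₃x₄x₅)`, multiplication by `x₁+⋯+x₅` from `(S/I)_k` to
`(S/I)_{k+1}` is neither injective nor surjective for `k = 8` and `k = 9`. -/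
theorem stmt13 {K : Type*} [Field K] [CharZero K] :
    ∀ k : ℕ, k = 8 ∨ k = 9 →
      (∃ f : MvPolynomial (Fin 5) K, f.IsHomogeneous k ∧
          f ∉ Ideal.span {X 0 ^ 5, X 1 ^ 5, X 2 ^ 5, X 3 ^ 5, X 4 ^ 5,
              X 0 * X 1 * X 2 * X 3 * X 4} ∧
          (X 0 + X 1 + X 2 + X 3 + X 4) * f ∈ Ideal.span {X 0 ^ 5, X 1 ^ 5, X 2 ^ 5,
              X 3 ^ 5, X 4 ^ 5, X 0 * X 1 * X 2 * X 3 * X 4})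
      ∧ (∃ g : MvPolynomial (Fin 5) K, g.IsHomogeneous (k + 1) ∧
          ∀ f : MvPolynomial (Fin 5) K, f.IsHomogeneous k →
            g - (X 0 + X 1 + X 2 + X 3 + X 4) * f ∉ Ideal.span {X 0 ^ 5, X 1 ^ 5,
              X 2 ^ 5, X 3 ^ 5, X 4 ^ 5, X 0 * X 1 * X 2 * X 3 * X 4}) := by
  have x : ∀ i : Fin 5, (X i : MvPolynomial (Fin 5) K).IsHomogeneous 1 :=
    fun i => isHomogeneous_X K i
  have g9 : (X 2 ^ 2 * X 3 ^ 3 * X 4 ^ 4 : MvPolynomial (Fin 5) K).IsHomogeneous 9 :=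
    (((x 2).pow 2).mul ((x 3).pow 3)).mul ((x 4).pow 4)
  rintro k (rfl | rfl)
  · refine ⟨⟨F8 K, F8_hom K, fun h => F9_not K (Ideal.mul_mem_left _ _ h), F8_ker K⟩,
      ⟨_, g9, fun f _ h => not_surj (X 1 * f) ?_⟩⟩
    have := Ideal.mul_mem_left _ (X 1) h
    rwa [mul_sub, mul_left_comm (X 1) _ f] at this
  · refine ⟨⟨X 2 * F8 K, (x 2).mul (F8_hom K), F9_not K, ?_⟩,
      ⟨_, (x 1).mul g9, fun f _ => not_surj f⟩⟩
    rw [mul_left_comm]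
    exact Ideal.mul_mem_left _ _ (F8_ker K)
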